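/- arXiv:2008.12651 — 2 statements merged into one kernel-verified Lean document; each statement's English description precedes it below -/
import Mathlib

section
/- Let F be a finite field, σ an automorphism of F with σ∘σ = id, and V a nonzero finite-dimensional F-vector space. Let β : V × V → F be additive in each variable, F-linear in the first variable and σ-semilinear in the second, reflexive (β(u,v) = 0 iff β(v,u) = 0), and nondegenerate on V. Let X be an invertible F-linear endomorphism of V with β(Xu, Xv) = β(u,v) for all u,v. Then there exist finitely many X-invariant subspaces U_1, …, U_k of V forming an internal direct sum V = U_1 ⊕ ⋯ ⊕ U_k, pairwise orthogonal (β(u,v) = 0 whenever u ∈ U_i, v ∈ U_j with i ≠ j), such that for each i one of the following holds: (a) U_i is a cyclic F[X]-module, i.e. U_i is spanned by {X^m v : m ∈ ℕ} for some v ∈ U_i, and the minimal polynomial of the restriction of X to U_i equals f^e for some monic irreducible f with f(0) ≠ 0, f = f*, and some e ≥ 1; or (b) U_i = W ⊕ W′ for X-invariant subspaces W and W′ that are cyclic F[X]-modules whose restricted minimal polynomials are f^e and (f*)^e respectively, for some monic irreducible f with f(0) ≠ 0 and some e ≥ 1. -/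
open Polynomial

/-- The σ-dual polynomial `f*(t) = σ(f(0))⁻¹ · t^(deg f) · (σf)(1/t)`. -/
noncomputable def sigmaDualPoly {F : Type*} [Field F] (σ : F ≃+* F) (f : Polynomial F) :
    Polynomial F :=
  Polynomial.C (σ (f.coeff 0))⁻¹ * (f.map σ.toRingHom).reverse

/-- `U` is a cyclic `F[X]`-submodule: it is spanned by the `X`-orbit of a single vector. -/
def IsCyclicSub {F V : Type*} [Field F] [AddCommGroup V] [Module F V]
    (X : V →ₗ[F] V) (U : Submodule F V) : Prop :=
  ∃ v ∈ U, U = Submodule.span F (Set.range fun m : ℕ => (X ^ m) v)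

section Dual

variable {F : Type*} [Field F]

theorem sigmaDualPoly_mul (σ : F ≃+* F) (p q : F[X]) :
    sigmaDualPoly σ (p * q) = sigmaDualPoly σ p * sigmaDualPoly σ q := by
  simp only [sigmaDualPoly, mul_coeff_zero, Polynomial.map_mul, reverse_mul_of_domain, map_mul,
    mul_inv]
  ring

theorem sigmaDualPoly_pow (σ : F ≃+* F) (p : F[X]) (n : ℕ) :
    sigmaDualPoly σ (p ^ n) = sigmaDualPoly σ p ^ n := by
  induction n with
  | zero =>
    have h : (1 : F[X]).reverse = 1 := reverse_C 1
    simp [sigmaDualPoly, h]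
  | succ n ih => rw [pow_succ, sigmaDualPoly_mul, ih, pow_succ]

theorem coeff_zero_pow_ne_zero {f : F[X]} (h0 : f.coeff 0 ≠ 0) (k : ℕ) :
    (f ^ k).coeff 0 ≠ 0 := by
  rw [coeff_zero_eq_eval_zero] at h0 ⊢
  rw [eval_pow]
  exact pow_ne_zero k h0

theorem natDegree_reverse_of_coeff_zero_ne_zero {p : F[X]} (hp : p.coeff 0 ≠ 0) :
    p.reverse.natDegree = p.natDegree := by
  rw [reverse_natDegree, natTrailingDegree_eq_zero.2 (Or.inr hp), Nat.sub_zero]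

theorem reverse_reverse_of_coeff_zero_ne_zero {p : F[X]} (hp : p.coeff 0 ≠ 0) :
    p.reverse.reverse = p := by
  have h : p.reverse.reverse = reflect p.natDegree p.reverse := by
    rw [reverse, natDegree_reverse_of_coeff_zero_ne_zero hp]
  rw [h, reverse, reflect_reflect]

theorem irreducible_reverse {p : F[X]} (hp : Irreducible p) (h0 : p.coeff 0 ≠ 0) :
    Irreducible p.reverse := by
  have key : ∀ a : F[X], a.coeff 0 ≠ 0 → IsUnit a.reverse → IsUnit a := by
    intro a ha hu
    have := natDegree_eq_zero_of_isUnit hu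
    rw [natDegree_reverse_of_coeff_zero_ne_zero ha] at this
    rw [eq_C_of_natDegree_eq_zero this]
    exact isUnit_C.2 (isUnit_iff_ne_zero.2 ha)
  have hr0 : p.reverse.coeff 0 ≠ 0 := by
    rw [coeff_zero_reverse]; exact leadingCoeff_ne_zero.2 hp.ne_zero
  refine ⟨fun hu => hp.not_isUnit (key p h0 hu), fun a b hab => ?_⟩
  have hab0 : a.coeff 0 ≠ 0 ∧ b.coeff 0 ≠ 0 := by
    rw [hab, mul_coeff_zero] at hr0
    exact mul_ne_zero_iff.1 hr0
  have h : p = a.reverse * b.reverse := by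
    rw [← reverse_mul_of_domain, ← hab, reverse_reverse_of_coeff_zero_ne_zero h0]
  exact (hp.isUnit_or_isUnit h).imp (key a hab0.1) (key b hab0.2)

theorem sigmaDualPoly_monic (σ : F ≃+* F) {f : F[X]} (h0 : f.coeff 0 ≠ 0) :
    (sigmaDualPoly σ f).Monic := by
  have h1 : (f.map σ.toRingHom).coeff 0 ≠ 0 := by simpa using h0
  rw [sigmaDualPoly, Monic, leadingCoeff_mul, leadingCoeff_C, reverse_leadingCoeff, trailingCoeff,
    natTrailingDegree_eq_zero.2 (Or.inr h1)]
  simp [h0]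

theorem sigmaDualPoly_irreducible (σ : F ≃+* F) {f : F[X]} (hf : Irreducible f)
    (h0 : f.coeff 0 ≠ 0) : Irreducible (sigmaDualPoly σ f) := by
  have h1 : (f.map σ.toRingHom).coeff 0 ≠ 0 := by simpa using h0
  have h2 : Irreducible (f.map σ.toRingHom) :=
    (MulEquiv.irreducible_iff (mapEquiv σ)).2 hf
  have h3 : IsUnit (C (σ (f.coeff 0))⁻¹) :=
    isUnit_C.2 (isUnit_iff_ne_zero.2 (inv_ne_zero (by simpa using h0)))
  rw [sigmaDualPoly, irreducible_isUnit_mul h3]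
  exact irreducible_reverse h2 h1

end Dual

section Annihilator

variable {F V : Type*} [Field F] [AddCommGroup V] [Module F V] {X : Module.End F V}

theorem pow_succ_dvd_of_aeval_apply_eq_zero {f : F[X]} (hf : Irreducible f) {n : ℕ} {v : V}
    (hv : aeval X (f ^ (n + 1)) v = 0) (hv' : aeval X (f ^ n) v ≠ 0) {p : F[X]}
    (hp : aeval X p v = 0) : f ^ (n + 1) ∣ p := by
  classical
  have hd : aeval X (EuclideanDomain.gcd p (f ^ (n + 1))) v = 0 := by
    rw [EuclideanDomain.gcd_eq_gcd_ab, mul_comm p, mul_comm (f ^ (n + 1))]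
    simp [hp, hv, -map_pow]
  obtain ⟨i, hi, hassoc⟩ :=
    (dvd_prime_pow hf.prime _).1 (EuclideanDomain.gcd_dvd_right p (f ^ (n + 1)))
  rcases Nat.lt_or_ge n i with h | h
  · obtain rfl : i = n + 1 := le_antisymm hi h
    exact hassoc.symm.dvd.trans (EuclideanDomain.gcd_dvd_left _ _)
  · obtain ⟨c, hc⟩ := hassoc.dvd.trans (pow_dvd_pow f h)
    refine (hv' ?_).elim
    rw [hc, mul_comm, map_mul, Module.End.mul_apply, hd, map_zero]

/-- Every nonzero vector of a cyclic `f`-primary module generates its socle. -/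
theorem exists_aeval_aeval_eq_pow {f : F[X]} (hf : Irreducible f) {n : ℕ} {v : V}
    (hv : aeval X (f ^ (n + 1)) v = 0) {p : F[X]} (hp : aeval X p v ≠ 0) :
    ∃ q : F[X], aeval X q (aeval X p v) = aeval X (f ^ n) v := by
  have hp0 : p ≠ 0 := by rintro rfl; simp at hp
  obtain ⟨i, a, ha, rfl⟩ : ∃ (i : ℕ) (a : F[X]), ¬ f ∣ a ∧ p = f ^ i * a := by
    obtain ⟨a, h1, h2⟩ := (FiniteMultiplicity.of_not_isUnit hf.not_isUnit
      hp0).exists_eq_pow_mul_and_not_dvd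
    exact ⟨_, a, h2, h1⟩
  have hi : i ≤ n := by
    by_contra! h
    apply hp
    obtain ⟨j, rfl⟩ := Nat.exists_eq_add_of_le (Nat.succ_le_of_lt h)
    rw [Nat.succ_eq_add_one, pow_add, mul_right_comm, mul_assoc, mul_comm, map_mul,
      Module.End.mul_apply, hv, map_zero]
  obtain ⟨b, c, hbc⟩ : IsCoprime a (f ^ (n + 1)) :=
    ((hf.coprime_iff_not_dvd.2 ha).symm).pow_right
  refine ⟨b * f ^ (n - i), ?_⟩
  rw [← Module.End.mul_apply, ← map_mul]
  have : b * f ^ (n - i) * (f ^ i * a) = f ^ n - f ^ n * c * f ^ (n + 1) := by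
    have h : f ^ n = f ^ (n - i) * f ^ i := by rw [← pow_add, Nat.sub_add_cancel hi]
    linear_combination (b * a) * (-h) + f ^ n * hbc
  rw [this, map_sub, map_mul _ _ (f ^ (n + 1)), LinearMap.sub_apply, Module.End.mul_apply, hv,
    map_zero, sub_zero]

theorem aeval_restrict_apply {N : Submodule F V} (hN : ∀ x ∈ N, X x ∈ N) (p : F[X]) (x : N) :
    (aeval (X.restrict hN) p x : V) = aeval X p x := by
  induction p using Polynomial.induction_on' with
  | add p q hp hq => simp [hp, hq]
  | monomial n a =>
    simp only [aeval_monomial, Module.End.mul_apply, Module.algebraMap_end_apply,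
      Submodule.coe_smul]
    rw [Module.End.pow_restrict n hN, LinearMap.coe_restrict_apply]

theorem minpoly_restrict_dvd_iff {N : Submodule F V} (hN : ∀ x ∈ N, X x ∈ N) (p : F[X]) :
    minpoly F (X.restrict hN) ∣ p ↔ ∀ x ∈ N, aeval X p x = 0 := by
  rw [minpoly.dvd_iff, LinearMap.ext_iff]
  refine ⟨fun h x hx => ?_, fun h x => Subtype.ext ?_⟩
  · rw [← aeval_restrict_apply hN p ⟨x, hx⟩, h]; simp
  · rw [aeval_restrict_apply, h x x.2]; simp

theorem aeval_apply_mem {N : Submodule F V} (hN : ∀ x ∈ N, X x ∈ N) (p : F[X]) {x : V}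
    (hx : x ∈ N) : aeval X p x ∈ N := by
  rw [← aeval_restrict_apply hN p ⟨x, hx⟩]; exact Subtype.property _

/-- The `F[X]`-submodule generated by `v`. -/
def cyclicSub (X : Module.End F V) (v : V) : Submodule F V :=
  Submodule.span F (Set.range fun m : ℕ => (X ^ m) v)

theorem mem_cyclicSub {v x : V} : x ∈ cyclicSub X v ↔ ∃ p : F[X], aeval X p v = x := by
  constructor
  · intro hx
    induction hx using Submodule.span_induction with
    | mem x hx => obtain ⟨m, rfl⟩ := hx; exact ⟨Polynomial.X ^ m, by simp⟩
    | zero => exact ⟨0, by simp⟩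
    | add x y _ _ hx hy =>
      obtain ⟨p, rfl⟩ := hx
      obtain ⟨q, rfl⟩ := hy
      exact ⟨p + q, by simp⟩
    | smul a x _ hx => obtain ⟨p, rfl⟩ := hx; exact ⟨a • p, by simp⟩
  · rintro ⟨p, rfl⟩
    rw [aeval_eq_sum_range, LinearMap.sum_apply]
    exact Submodule.sum_mem _ fun m _ =>
      Submodule.smul_mem _ _ (Submodule.subset_span ⟨m, rfl⟩)

theorem self_mem_cyclicSub (v : V) : v ∈ cyclicSub X v := mem_cyclicSub.2 ⟨1, by simp⟩

theorem isCyclicSub_cyclicSub (v : V) : IsCyclicSub X (cyclicSub X v) :=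
  ⟨v, self_mem_cyclicSub v, rfl⟩

theorem apply_mem_cyclicSub (v : V) : ∀ x ∈ cyclicSub X v, X x ∈ cyclicSub X v := by
  intro x hx
  obtain ⟨p, rfl⟩ := mem_cyclicSub.1 hx
  exact mem_cyclicSub.2 ⟨Polynomial.X * p, by simp⟩

theorem cyclicSub_le {N : Submodule F V} (hN : ∀ x ∈ N, X x ∈ N) {v : V} (hv : v ∈ N) :
    cyclicSub X v ≤ N := by
  intro x hx
  obtain ⟨p, rfl⟩ := mem_cyclicSub.1 hx
  exact aeval_apply_mem hN p hv

theorem minpoly_restrict_cyclicSub [FiniteDimensional F V] {f : F[X]} (hm : f.Monic)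
    (hf : Irreducible f) {n : ℕ} {v : V} (hv : aeval X (f ^ (n + 1)) v = 0)
    (hv' : aeval X (f ^ n) v ≠ 0) (h : ∀ x ∈ cyclicSub X v, X x ∈ cyclicSub X v) :
    minpoly F (X.restrict h) = f ^ (n + 1) := by
  refine eq_of_monic_of_associated (minpoly.monic (Algebra.IsIntegral.isIntegral _)) (hm.pow _)
    (associated_of_dvd_dvd ?_ ?_)
  · rw [minpoly_restrict_dvd_iff]
    intro x hx
    obtain ⟨p, rfl⟩ := mem_cyclicSub.1 hx
    rw [← Module.End.mul_apply, ← map_mul, mul_comm, map_mul, Module.End.mul_apply, hv, map_zero]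
  · exact pow_succ_dvd_of_aeval_apply_eq_zero hf hv hv'
      ((minpoly_restrict_dvd_iff h _).1 dvd_rfl v (self_mem_cyclicSub v))

theorem exists_pow_apply_eq [FiniteDimensional F V] (hX : Function.Injective X)
    {N : Submodule F V} (hN : ∀ x ∈ N, X x ∈ N) (k : ℕ) {y : V} (hy : y ∈ N) :
    ∃ z ∈ N, (X ^ k) z = y := by
  have hinj : Function.Injective (X.restrict hN) := fun a b hab =>
    Subtype.ext (hX (congrArg Subtype.val hab))
  have hsurj := LinearMap.injective_iff_surjective.1 hinj
  induction k generalizing y with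
  | zero => exact ⟨y, hy, by simp⟩
  | succ k ih =>
    obtain ⟨w, hw⟩ := hsurj ⟨y, hy⟩
    obtain ⟨z, hz, hzw⟩ := ih w.2
    exact ⟨z, hz, by rw [pow_succ', Module.End.mul_apply, hzw]; exact congrArg Subtype.val hw⟩

end Annihilator

section Form

variable {F V : Type*} [Field F] [AddCommGroup V] [Module F V] {σ : F ≃+* F}
  {B : V →ₗ[F] V →ₛₗ[(σ : F →+* F)] F} {X : Module.End F V}

theorem apply_pow_pow (hXB : ∀ u v, B (X u) (X v) = B u v) (n : ℕ) (u v : V) :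
    B ((X ^ n) u) ((X ^ n) v) = B u v := by
  induction n with
  | zero => simp
  | succ n ih => rw [pow_succ', Module.End.mul_apply, Module.End.mul_apply, hXB, ih]

theorem apply_aeval_pow_eq_reflect (hσ : ∀ a, σ (σ a) = a)
    (hXB : ∀ u v, B (X u) (X v) = B u v) (N : ℕ) (p : F[X]) (hp : p.natDegree ≤ N) (u v : V) :
    B (aeval X p u) ((X ^ N) v) = B u (aeval X (reflect N (p.map (σ : F →+* F))) v) := by
  refine Polynomial.induction_with_natDegree_le (fun p => B (aeval X p u) ((X ^ N) v) =
    B u (aeval X (reflect N (p.map (σ : F →+* F))) v)) N ?_ ?_ ?_ p hp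
  · simp
  · intro n r _ hn
    obtain ⟨k, rfl⟩ := Nat.exists_eq_add_of_le hn
    have h : revAt (n + k) n = k := by rw [revAt_le hn, Nat.add_sub_cancel_left]
    simp [h, pow_add, apply_pow_pow hXB, hσ, Module.algebraMap_end_apply]
  · intro p q _ _ hp hq
    simp [reflect_add, hp, hq]

theorem apply_aeval_pow_eq_reverse (hσ : ∀ a, σ (σ a) = a)
    (hXB : ∀ u v, B (X u) (X v) = B u v) (p : F[X]) (u v : V) :
    B (aeval X p u) ((X ^ p.natDegree) v) = B u (aeval X (p.map (σ : F →+* F)).reverse v) := by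
  rw [apply_aeval_pow_eq_reflect hσ hXB _ p le_rfl, reverse, natDegree_map]

theorem apply_aeval_pow_eq_sigmaDualPoly (hσ : ∀ a, σ (σ a) = a)
    (hXB : ∀ u v, B (X u) (X v) = B u v) {p : F[X]} (hp : p.coeff 0 ≠ 0) (u v : V) :
    B (aeval X p u) ((X ^ p.natDegree) v) =
      p.coeff 0 * B u (aeval X (sigmaDualPoly σ p) v) := by
  rw [apply_aeval_pow_eq_reverse hσ hXB, sigmaDualPoly]
  simp [Module.algebraMap_end_apply, hσ, hp]

/-- The orthogonal complement, read from the left. -/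
theorem mem_orthogonalBilin_iff_left (hB : B.IsRefl) {N : Submodule F V} {x : V} :
    x ∈ N.orthogonalBilin B ↔ ∀ y ∈ N, B x y = 0 :=
  ⟨fun h y hy => hB _ _ (h y hy), fun h y hy => hB _ _ (h y hy)⟩

theorem aeval_apply_mem_orthogonalBilin [FiniteDimensional F V] (hX : Function.Injective X)
    (hXB : ∀ u v, B (X u) (X v) = B u v) {N : Submodule F V} (hN : ∀ x ∈ N, X x ∈ N) (p : F[X])
    {x : V} (hx : x ∈ N.orthogonalBilin B) : aeval X p x ∈ N.orthogonalBilin B := by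
  refine aeval_apply_mem (fun x hx y hy => ?_) p hx
  obtain ⟨z, hz, rfl⟩ := exists_pow_apply_eq hX hN 1 hy
  rw [pow_one]
  exact (hXB z x).trans (hx z hz)

theorem sup_orthogonalBilin_eq_top [FiniteDimensional F V] (hB : B.IsRefl) {U : Submodule F V}
    (hU : U ⊓ U.orthogonalBilin B = ⊥) : U ⊔ U.orthogonalBilin B = ⊤ := by
  let b := Module.finBasis F U
  let L : V →ₗ[F] (Fin (Module.finrank F U) → F) :=
    { toFun := fun x i => B x (b i)
      map_add' := fun x y => by ext; simp
      map_smul' := fun a x => by ext; simp }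
  have hL : ∀ x, L x = 0 → x ∈ U.orthogonalBilin B := by
    intro x hx
    rw [mem_orthogonalBilin_iff_left hB]
    intro y hy
    have h : ((b.equivFun.symm (b.equivFun ⟨y, hy⟩) : U) : V) = y := by simp
    have hx' : ∀ i, B x (b i) = 0 := fun i => congrFun hx i
    rw [← h, Module.Basis.equivFun_symm_apply]
    simp only [Submodule.coe_sum, Submodule.coe_smul, map_sum, map_smulₛₗ, hx', smul_zero,
      Finset.sum_const_zero]
  have hinj : Function.Injective (L ∘ₗ U.subtype) := by
    rw [← LinearMap.ker_eq_bot, LinearMap.ker_eq_bot']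
    intro x hx
    have h : (x : V) ∈ U ⊓ U.orthogonalBilin B := ⟨x.2, hL x hx⟩
    rw [hU, Submodule.mem_bot] at h
    exact Subtype.ext h
  have hsurj : Function.Surjective (L ∘ₗ U.subtype) :=
    (LinearMap.injective_iff_surjective_of_finrank_eq_finrank (by simp)).1 hinj
  rw [eq_top_iff]
  intro x _
  obtain ⟨u, hu⟩ := hsurj (L x)
  rw [Submodule.mem_sup]
  exact ⟨u, u.2, x - u, hL _ (by rw [map_sub, ← hu]; simp), by simp⟩

theorem isCoprime_pow_sigmaDualPoly_pow {f : F[X]} (hm : f.Monic) (hf : Irreducible f)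
    (h0 : f.coeff 0 ≠ 0) (hne : sigmaDualPoly σ f ≠ f) (k : ℕ) :
    IsCoprime (f ^ k) (sigmaDualPoly σ f ^ k) := by
  refine IsCoprime.pow (hf.coprime_iff_not_dvd.2 fun hdvd => hne ?_)
  exact (eq_of_monic_of_associated hm (sigmaDualPoly_monic σ h0)
    (hf.associated_of_dvd (sigmaDualPoly_irreducible σ hf h0) hdvd)).symm

theorem apply_eq_zero_of_ne_sigmaDualPoly (hσ : ∀ a, σ (σ a) = a)
    (hXB : ∀ u v, B (X u) (X v) = B u v) {f : F[X]} (hm : f.Monic) (hf : Irreducible f)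
    (h0 : f.coeff 0 ≠ 0) (hne : sigmaDualPoly σ f ≠ f) (k : ℕ) {u v : V}
    (hu : aeval X (f ^ k) u = 0) (hv : aeval X (f ^ k) v = 0) : B u v = 0 := by
  obtain ⟨a, b, hab⟩ := isCoprime_pow_sigmaDualPoly_pow hm hf h0 hne k
  have h : v = aeval X (sigmaDualPoly σ (f ^ k)) (aeval X b v) := by
    rw [← Module.End.mul_apply, ← map_mul, sigmaDualPoly_pow, mul_comm, eq_sub_iff_add_eq'.2 hab]
    simp [-map_pow, hv]
  have h1 : (f ^ k).coeff 0 ≠ 0 := coeff_zero_pow_ne_zero h0 k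
  have h2 := apply_aeval_pow_eq_sigmaDualPoly hσ hXB h1 u (aeval X b v)
  rw [hu, ← h, map_zero, LinearMap.zero_apply, eq_comm, mul_eq_zero] at h2
  exact h2.resolve_left h1

theorem apply_eq_zero_of_ne_sigmaDualPoly' [FiniteDimensional F V] (hσ : ∀ a, σ (σ a) = a)
    (hX : Function.Injective X) (hB : B.IsRefl)
    (hXB : ∀ u v, B (X u) (X v) = B u v) {f : F[X]} (hm : f.Monic) (hf : Irreducible f)
    (h0 : f.coeff 0 ≠ 0) (hne : sigmaDualPoly σ f ≠ f) (k : ℕ) {u v : V}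
    (hu : aeval X (sigmaDualPoly σ f ^ k) u = 0) (hv : aeval X (sigmaDualPoly σ f ^ k) v = 0) :
    B u v = 0 := by
  obtain ⟨a, b, hab⟩ := isCoprime_pow_sigmaDualPoly_pow hm hf h0 hne k
  have h : v = aeval X (f ^ k) (aeval X a v) := by
    rw [← Module.End.mul_apply, ← map_mul, mul_comm, eq_sub_iff_add_eq.2 hab]
    simp [-map_pow, hv]
  have h1 : (f ^ k).coeff 0 ≠ 0 := coeff_zero_pow_ne_zero h0 k
  obtain ⟨w, hw, hwu⟩ := exists_pow_apply_eq hX (apply_mem_cyclicSub u) (f ^ k).natDegree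
    (self_mem_cyclicSub u)
  obtain ⟨p, rfl⟩ := mem_cyclicSub.1 hw
  have h2 := apply_aeval_pow_eq_sigmaDualPoly hσ hXB h1 (aeval X a v) (aeval X p u)
  rw [hwu, ← h, sigmaDualPoly_pow, ← Module.End.mul_apply, ← map_mul, mul_comm _ p, map_mul,
    Module.End.mul_apply, hu, map_zero, map_zero, mul_zero] at h2
  exact hB _ _ h2

theorem aeval_apply_eq_zero_of_mem_cyclicSub {v x : V} {r : F[X]} (hr : aeval X r v = 0)
    (hx : x ∈ cyclicSub X v) : aeval X r x = 0 := by
  obtain ⟨p, rfl⟩ := mem_cyclicSub.1 hx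
  rw [← Module.End.mul_apply, ← map_mul, mul_comm, map_mul, Module.End.mul_apply, hr, map_zero]

theorem eq_zero_of_mem_cyclicSub_of_mem_orthogonalBilin [FiniteDimensional F V]
    (hX : Function.Injective X) (hXB : ∀ u v, B (X u) (X v) = B u v) {f : F[X]}
    (hf : Irreducible f) {n : ℕ} {v x : V} {N : Submodule F V} (hN : ∀ x ∈ N, X x ∈ N)
    (hv : aeval X (f ^ (n + 1)) v = 0) (hv' : aeval X (f ^ n) v ∉ N.orthogonalBilin B)
    (hx : x ∈ cyclicSub X v) (hxN : x ∈ N.orthogonalBilin B) : x = 0 := by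
  by_contra hx0
  obtain ⟨p, rfl⟩ := mem_cyclicSub.1 hx
  obtain ⟨q, hq⟩ := exists_aeval_aeval_eq_pow hf hv hx0
  exact hv' (hq ▸ aeval_apply_mem_orthogonalBilin hX hXB hN q hxN)

theorem mem_orthogonalBilin_of_mem_socle [FiniteDimensional F V]
    (hX : Function.Injective X) (hXB : ∀ u v, B (X u) (X v) = B u v) {f : F[X]}
    (hf : Irreducible f) {n : ℕ} {v x : V} {N : Submodule F V} (hN : ∀ x ∈ N, X x ∈ N)
    (hv : aeval X (f ^ (n + 1)) v = 0) (hv0 : aeval X (f ^ n) v ≠ 0)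
    (hvN : aeval X (f ^ n) v ∈ N.orthogonalBilin B)
    (hx : x ∈ cyclicSub X v) (hfx : aeval X f x = 0) : x ∈ N.orthogonalBilin B := by
  obtain ⟨p, rfl⟩ := mem_cyclicSub.1 hx
  rw [← Module.End.mul_apply, ← map_mul] at hfx
  have h := pow_succ_dvd_of_aeval_apply_eq_zero hf hv hv0 hfx
  rw [pow_succ', mul_dvd_mul_iff_left hf.ne_zero] at h
  obtain ⟨q, rfl⟩ := h
  rw [mul_comm, map_mul, Module.End.mul_apply]
  exact aeval_apply_mem_orthogonalBilin hX hXB hN q hvN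

theorem dual_pairing_symm [FiniteDimensional F V] (hσ : ∀ a, σ (σ a) = a)
    (hX : Function.Injective X) (hB : B.IsRefl) (hXB : ∀ u v, B (X u) (X v) = B u v)
    {f : F[X]} (h0 : f.coeff 0 ≠ 0) {n : ℕ} {v v' : V}
    (h : aeval X (f ^ n) v ∉ (cyclicSub X v').orthogonalBilin B) :
    aeval X (sigmaDualPoly σ f ^ n) v' ∉ (cyclicSub X v).orthogonalBilin B := by
  contrapose! h
  rw [mem_orthogonalBilin_iff_left hB]
  intro y hy
  obtain ⟨z, hz, rfl⟩ := exists_pow_apply_eq hX (apply_mem_cyclicSub v') (f ^ n).natDegree hy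
  obtain ⟨p, rfl⟩ := mem_cyclicSub.1 hz
  have h1 := aeval_apply_mem_orthogonalBilin hX hXB (apply_mem_cyclicSub v) p h
  rw [apply_aeval_pow_eq_sigmaDualPoly hσ hXB (coeff_zero_pow_ne_zero h0 n), sigmaDualPoly_pow,
    ← Module.End.mul_apply, ← map_mul, mul_comm _ p, map_mul, Module.End.mul_apply,
    h1 v (self_mem_cyclicSub v), mul_zero]

theorem coeff_zero_ne_zero_of_aeval_apply_eq_zero (hX : Function.Injective X) {f : F[X]}
    (hf : Irreducible f) {w : V} (hw : w ≠ 0) (hfw : aeval X f w = 0) : f.coeff 0 ≠ 0 := by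
  intro h
  obtain ⟨q, rfl⟩ := X_dvd_iff.2 h
  obtain ⟨r, hr⟩ := ((hf.isUnit_or_isUnit rfl).resolve_left not_isUnit_X).exists_left_inv
  rw [map_mul, aeval_X, Module.End.mul_apply] at hfw
  have hq : aeval X q w = 0 := hX (by rw [hfw, map_zero])
  apply hw
  have : aeval X (r * q) w = 0 := by rw [map_mul, Module.End.mul_apply, hq, map_zero]
  simpa [hr] using this

theorem exists_dual_pair [FiniteDimensional F V] (hσ : ∀ a, σ (σ a) = a)
    (hX : Function.Injective X) (hB : B.IsRefl) (hXB : ∀ u v, B (X u) (X v) = B u v)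
    {N : Submodule F V} (hN : ∀ x ∈ N, X x ∈ N) (hnd : N ⊓ N.orthogonalBilin B = ⊥)
    (hne : N ≠ ⊥) :
    ∃ (f : F[X]) (n : ℕ) (v v' : V), f.Monic ∧ Irreducible f ∧ f.coeff 0 ≠ 0 ∧ v ∈ N ∧ v' ∈ N ∧
      aeval X (f ^ (n + 1)) v = 0 ∧ aeval X (sigmaDualPoly σ f ^ (n + 1)) v' = 0 ∧
      aeval X (f ^ n) v ∉ (cyclicSub X v').orthogonalBilin B := by
  have hμ := minpoly_restrict_dvd_iff hN
  have hμm : (minpoly F (X.restrict hN)).Monic :=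
    minpoly.monic (Algebra.IsIntegral.isIntegral _)
  set μ := minpoly F (X.restrict hN)
  have hμu : ¬ IsUnit μ := by
    intro hu
    obtain ⟨x, hx, hx0⟩ := N.ne_bot_iff.1 hne
    exact hx0 (by simpa using (hμ 1).1 hu.dvd x hx)
  obtain ⟨f, hfm, hf, hfμ⟩ := exists_monic_irreducible_factor μ hμu
  obtain ⟨h, hμh, hfh⟩ := (FiniteMultiplicity.of_not_isUnit hf.not_isUnit
      hμm.ne_zero).exists_eq_pow_mul_and_not_dvd
  obtain ⟨n, hn⟩ : ∃ n, multiplicity f μ = n + 1 := by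
    refine Nat.exists_eq_succ_of_ne_zero fun h0 => hfh ?_
    rw [h0, pow_zero, one_mul] at hμh
    rwa [← hμh]
  rw [hn] at hμh
  obtain ⟨y, hy, hy0⟩ : ∃ y ∈ N, aeval X (f ^ n * h) y ≠ 0 := by
    by_contra! hcon
    have hdvd := (hμ _).2 hcon
    have hh0 : h ≠ 0 := by rintro rfl; simp at hfh
    rw [hμh, mul_dvd_mul_iff_right hh0, pow_dvd_pow_iff hf.ne_zero hf.not_isUnit] at hdvd
    omega
  obtain ⟨b, c, hbc⟩ : IsCoprime h (f ^ (n + 1)) :=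
    ((hf.coprime_iff_not_dvd.2 hfh).symm).pow_right
  have hμN := (hμ μ).1 dvd_rfl
  have hv : aeval X (f ^ (n + 1)) (aeval X (b * h) y) = 0 := by
    rw [← Module.End.mul_apply, ← map_mul, mul_left_comm, ← hμh, map_mul, Module.End.mul_apply,
      hμN y hy, map_zero]
  have hw : aeval X h (aeval X (f ^ n) (aeval X (b * h) y)) = aeval X (f ^ n * h) y := by
    have e : h * (f ^ n * (b * h)) = f ^ n * h - f ^ n * c * μ := by
      rw [hμh]; linear_combination (f ^ n * h) * hbc
    rw [← Module.End.mul_apply, ← map_mul, ← Module.End.mul_apply, ← map_mul, mul_assoc, e,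
      map_sub, map_mul _ _ μ, LinearMap.sub_apply, Module.End.mul_apply, hμN y hy, map_zero,
      sub_zero]
  have hvN : aeval X (b * h) y ∈ N := aeval_apply_mem hN _ hy
  generalize aeval X (b * h) y = v at hv hw hvN
  have h0 : f.coeff 0 ≠ 0 := by
    refine coeff_zero_ne_zero_of_aeval_apply_eq_zero (w := aeval X (f ^ n) v) hX hf ?_ ?_
    · intro h1
      rw [h1, map_zero] at hw
      exact hy0 hw.symm
    · rw [← Module.End.mul_apply, ← map_mul, ← pow_succ', hv]
  obtain ⟨z, hz, hz0⟩ : ∃ z ∈ N, B (aeval X h (aeval X (f ^ n) v)) z ≠ 0 := by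
    by_contra! hcon
    have hmem : aeval X (f ^ n * h) y ∈ N ⊓ N.orthogonalBilin B := by
      rw [← hw]
      exact ⟨aeval_apply_mem hN _ (aeval_apply_mem hN _ hvN),
        (mem_orthogonalBilin_iff_left hB).2 hcon⟩
    rw [hnd] at hmem
    exact hy0 hmem
  obtain ⟨z, hzN, rfl⟩ := exists_pow_apply_eq hX hN h.natDegree hz
  rw [apply_aeval_pow_eq_reverse hσ hXB] at hz0
  refine ⟨f, n, v, aeval X (h.map (σ : F →+* F)).reverse z, hfm, hf, h0, hvN,
    aeval_apply_mem hN _ hzN, hv, ?_, fun hmem =>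
      hz0 ((mem_orthogonalBilin_iff_left hB).1 hmem _ (self_mem_cyclicSub _))⟩
  have hzμ : aeval X (μ.map (σ : F →+* F)).reverse z = 0 := by
    have hmem : aeval X (μ.map (σ : F →+* F)).reverse z ∈ N ⊓ N.orthogonalBilin B := by
      refine ⟨aeval_apply_mem hN _ hzN, fun x hx => ?_⟩
      rw [← apply_aeval_pow_eq_reverse hσ hXB, hμN x hx, map_zero, LinearMap.zero_apply]
    rwa [hnd] at hmem
  rw [← sigmaDualPoly_pow, sigmaDualPoly, ← Module.End.mul_apply, ← map_mul, mul_assoc]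
  change aeval X (_ * (((f ^ (n + 1)).map (σ : F →+* F)).reverse * _)) z = 0
  rw [← reverse_mul_of_domain, ← Polynomial.map_mul, ← hμh, map_mul, Module.End.mul_apply, hzμ,
    map_zero]

theorem eq_zero_of_add_mem_orthogonalBilin [FiniteDimensional F V] (hσ : ∀ a, σ (σ a) = a)
    (hX : Function.Injective X) (hB : B.IsRefl) (hXB : ∀ u v, B (X u) (X v) = B u v)
    {f : F[X]} (hm : f.Monic) (hf : Irreducible f) (h0 : f.coeff 0 ≠ 0) {n : ℕ} {v v' : V}
    (hv : aeval X (f ^ (n + 1)) v = 0) (hv' : aeval X (sigmaDualPoly σ f ^ (n + 1)) v' = 0)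
    (hvv' : aeval X (f ^ n) v ∉ (cyclicSub X v').orthogonalBilin B)
    (hself : sigmaDualPoly σ f = f →
      aeval X (f ^ n) v ∈ (cyclicSub X v).orthogonalBilin B ∧
      aeval X (f ^ n) v' ∈ (cyclicSub X v').orthogonalBilin B)
    {a b : V} (ha : a ∈ cyclicSub X v) (hb : b ∈ cyclicSub X v')
    (hab : a + b ∈ (cyclicSub X v ⊔ cyclicSub X v').orthogonalBilin B) : a = 0 ∧ b = 0 := by
  have hv'v := dual_pairing_symm hσ hX hB hXB h0 hvv'
  have hg := sigmaDualPoly_irreducible σ hf h0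
  have key : ∀ a ∈ cyclicSub X v, ∀ b ∈ cyclicSub X v',
      a + b ∈ (cyclicSub X v ⊔ cyclicSub X v').orthogonalBilin B →
      a ∈ (cyclicSub X v).orthogonalBilin B → b ∈ (cyclicSub X v').orthogonalBilin B →
      a = 0 ∧ b = 0 := by
    intro a ha b hb hab haa hbb
    have h1 := Submodule.orthogonalBilin_le (B := B) (le_sup_left (b := cyclicSub X v')) hab
    have h2 := Submodule.orthogonalBilin_le (B := B) (le_sup_right (a := cyclicSub X v)) hab
    exact ⟨eq_zero_of_mem_cyclicSub_of_mem_orthogonalBilin hX hXB hf (apply_mem_cyclicSub v') hv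
      hvv' ha ((Submodule.add_mem_iff_left _ hbb).1 h2),
      eq_zero_of_mem_cyclicSub_of_mem_orthogonalBilin hX hXB hg (apply_mem_cyclicSub v) hv'
      hv'v hb ((Submodule.add_mem_iff_right _ haa).1 h1)⟩
  by_cases hd : sigmaDualPoly σ f = f
  · rw [hd] at hv' hv'v
    have hv0 : aeval X (f ^ n) v ≠ 0 := fun h => hvv' (h ▸ zero_mem _)
    have hv'0 : aeval X (f ^ n) v' ≠ 0 := fun h => hv'v (h ▸ zero_mem _)
    have hind : ∀ k : ℕ, ∀ a ∈ cyclicSub X v, ∀ b ∈ cyclicSub X v',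
        a + b ∈ (cyclicSub X v ⊔ cyclicSub X v').orthogonalBilin B →
        aeval X (f ^ k) a = 0 → aeval X (f ^ k) b = 0 → a = 0 ∧ b = 0 := by
      intro k
      induction k with
      | zero => intro a _ b _ _ h1 h2; exact ⟨by simpa using h1, by simpa using h2⟩
      | succ k ih =>
        intro a ha b hb hab h1 h2
        rw [pow_succ, map_mul, Module.End.mul_apply] at h1 h2
        have hinv : ∀ x ∈ cyclicSub X v ⊔ cyclicSub X v', X x ∈ cyclicSub X v ⊔ cyclicSub X v' :=
          sup_le (c := (cyclicSub X v ⊔ cyclicSub X v').comap X)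
            (fun x hx => Submodule.mem_sup_left (apply_mem_cyclicSub v x hx))
            (fun x hx => Submodule.mem_sup_right (apply_mem_cyclicSub v' x hx))
        have hfab := aeval_apply_mem_orthogonalBilin hX hXB hinv f hab
        rw [map_add] at hfab
        obtain ⟨h3, h4⟩ := ih _ (aeval_apply_mem (apply_mem_cyclicSub v) f ha) _
          (aeval_apply_mem (apply_mem_cyclicSub v') f hb) hfab h1 h2
        exact key a ha b hb hab
          (mem_orthogonalBilin_of_mem_socle hX hXB hf (apply_mem_cyclicSub v) hv hv0
            (hself hd).1 ha h3)
          (mem_orthogonalBilin_of_mem_socle hX hXB hf (apply_mem_cyclicSub v') hv' hv'0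
            (hself hd).2 hb h4)
    exact hind (n + 1) a ha b hb hab (aeval_apply_eq_zero_of_mem_cyclicSub hv ha)
      (aeval_apply_eq_zero_of_mem_cyclicSub hv' hb)
  · exact key a ha b hb hab
      (fun y hy => apply_eq_zero_of_ne_sigmaDualPoly hσ hXB hm hf h0 hd (n + 1)
        (aeval_apply_eq_zero_of_mem_cyclicSub hv hy) (aeval_apply_eq_zero_of_mem_cyclicSub hv ha))
      (fun y hy => apply_eq_zero_of_ne_sigmaDualPoly' hσ hX hB hXB hm hf h0 hd (n + 1)
        (aeval_apply_eq_zero_of_mem_cyclicSub hv' hy)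
        (aeval_apply_eq_zero_of_mem_cyclicSub hv' hb))

/-- An `X`-invariant subspace that is either cyclic with minimal polynomial a power of a self-dual
irreducible polynomial, or the direct sum of two cyclic submodules with dual minimal polynomials. -/
def IsOrthogonalBlock (σ : F ≃+* F) (X : V →ₗ[F] V) (U : Submodule F V) : Prop :=
  ∃ hinv : ∀ x ∈ U, X x ∈ U,
    (IsCyclicSub X U ∧
      ∃ (f : Polynomial F) (e : ℕ), f.Monic ∧ Irreducible f ∧ f.coeff 0 ≠ 0 ∧
        sigmaDualPoly σ f = f ∧ 1 ≤ e ∧ minpoly F (X.restrict hinv) = f ^ e)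
    ∨
    (∃ (W W' : Submodule F V) (hW : ∀ x ∈ W, X x ∈ W) (hW' : ∀ x ∈ W', X x ∈ W'),
      U = W ⊔ W' ∧ W ⊓ W' = ⊥ ∧ IsCyclicSub X W ∧ IsCyclicSub X W' ∧
      ∃ (f : Polynomial F) (e : ℕ), f.Monic ∧ Irreducible f ∧ f.coeff 0 ≠ 0 ∧ 1 ≤ e ∧
        minpoly F (X.restrict hW) = f ^ e ∧
        minpoly F (X.restrict hW') = (sigmaDualPoly σ f) ^ e)

theorem exists_isOrthogonalBlock_le [FiniteDimensional F V] (hσ : ∀ a, σ (σ a) = a)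
    (hX : Function.Injective X) (hB : B.IsRefl) (hXB : ∀ u v, B (X u) (X v) = B u v)
    {N : Submodule F V} (hN : ∀ x ∈ N, X x ∈ N) (hnd : N ⊓ N.orthogonalBilin B = ⊥)
    (hne : N ≠ ⊥) :
    ∃ U ≤ N, U ≠ ⊥ ∧ U ⊓ U.orthogonalBilin B = ⊥ ∧ IsOrthogonalBlock σ X U := by
  obtain ⟨f, n, v, v', hm, hf, h0, hvN, hv'N, hv, hv', hvv'⟩ :=
    exists_dual_pair hσ hX hB hXB hN hnd hne
  by_cases hcase : ∃ u ∈ N, aeval X (f ^ (n + 1)) u = 0 ∧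
      aeval X (f ^ n) u ∉ (cyclicSub X u).orthogonalBilin B
  · obtain ⟨u, huN, hu, hu'⟩ := hcase
    have hu0 : aeval X (f ^ n) u ≠ 0 := fun h => hu' (h ▸ zero_mem _)
    refine ⟨cyclicSub X u, cyclicSub_le hN huN, ?_, ?_, apply_mem_cyclicSub u,
      Or.inl ⟨isCyclicSub_cyclicSub u, f, n + 1, hm, hf, h0, ?_, by omega,
        minpoly_restrict_cyclicSub hm hf hu hu0 _⟩⟩
    · exact (Submodule.ne_bot_iff _).2 ⟨_, mem_cyclicSub.2 ⟨_, rfl⟩, hu0⟩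
    · exact (Submodule.eq_bot_iff _).2 fun x hx =>
        eq_zero_of_mem_cyclicSub_of_mem_orthogonalBilin hX hXB hf (apply_mem_cyclicSub u) hu hu'
          hx.1 hx.2
    · by_contra hd
      exact hu' fun y hy => apply_eq_zero_of_ne_sigmaDualPoly hσ hXB hm hf h0 hd (n + 1)
        (aeval_apply_eq_zero_of_mem_cyclicSub hu hy)
        (aeval_apply_eq_zero_of_mem_cyclicSub hu (mem_cyclicSub.2 ⟨_, rfl⟩))
  · push Not at hcase
    have hv0 : aeval X (f ^ n) v ≠ 0 := fun h => hvv' (h ▸ zero_mem _)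
    have hv'0 : aeval X (sigmaDualPoly σ f ^ n) v' ≠ 0 := fun h =>
      dual_pairing_symm hσ hX hB hXB h0 hvv' (h ▸ zero_mem _)
    have key : ∀ a ∈ cyclicSub X v, ∀ b ∈ cyclicSub X v',
        a + b ∈ (cyclicSub X v ⊔ cyclicSub X v').orthogonalBilin B → a = 0 ∧ b = 0 :=
      fun a ha b hb => eq_zero_of_add_mem_orthogonalBilin hσ hX hB hXB hm hf h0 hv hv' hvv'
        (fun hd => ⟨hcase v hvN hv, hcase v' hv'N (by rwa [hd] at hv')⟩) ha hb
    refine ⟨cyclicSub X v ⊔ cyclicSub X v', sup_le (cyclicSub_le hN hvN) (cyclicSub_le hN hv'N),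
      ?_, ?_, ?_, Or.inr ⟨_, _, apply_mem_cyclicSub v, apply_mem_cyclicSub v', rfl, ?_,
        isCyclicSub_cyclicSub v, isCyclicSub_cyclicSub v', f, n + 1, hm, hf, h0, by omega,
        minpoly_restrict_cyclicSub hm hf hv hv0 _,
        minpoly_restrict_cyclicSub (sigmaDualPoly_monic σ h0) (sigmaDualPoly_irreducible σ hf h0)
          hv' hv'0 _⟩⟩
    · exact (Submodule.ne_bot_iff _).2
        ⟨_, Submodule.mem_sup_left (mem_cyclicSub.2 ⟨_, rfl⟩), hv0⟩
    · refine (Submodule.eq_bot_iff _).2 fun x hx => ?_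
      obtain ⟨a, ha, b, hb, rfl⟩ := Submodule.mem_sup.1 hx.1
      obtain ⟨rfl, rfl⟩ := key a ha b hb hx.2
      exact add_zero 0
    · exact sup_le (c := (cyclicSub X v ⊔ cyclicSub X v').comap X)
        (fun x hx => Submodule.mem_sup_left (apply_mem_cyclicSub v x hx))
        (fun x hx => Submodule.mem_sup_right (apply_mem_cyclicSub v' x hx))
    · refine (Submodule.eq_bot_iff _).2 fun x hx => (key x hx.1 (-x) (neg_mem hx.2) ?_).1
      rw [add_neg_cancel]
      exact zero_mem _

theorem exists_isOrthogonalBlock_decomposition [FiniteDimensional F V] (hσ : ∀ a, σ (σ a) = a)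
    (hX : Function.Injective X) (hB : B.IsRefl) (hXB : ∀ u v, B (X u) (X v) = B u v)
    (N : Submodule F V) (hN : ∀ x ∈ N, X x ∈ N) (hnd : N ⊓ N.orthogonalBilin B = ⊥) :
    ∃ (k : ℕ) (U : Fin k → Submodule F V), ⨆ i, U i = N ∧
      (∀ i j, i ≠ j → ∀ u ∈ U i, ∀ v ∈ U j, B u v = 0) ∧
      (∀ i, U i ⊓ (U i).orthogonalBilin B = ⊥) ∧ ∀ i, IsOrthogonalBlock σ X (U i) := by
  induction N using WellFoundedLT.induction with
  | ind N ih =>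
  by_cases hne : N = ⊥
  · exact ⟨0, Fin.elim0, by simp [hne], fun i => i.elim0, fun i => i.elim0, fun i => i.elim0⟩
  obtain ⟨W, hWN, hW0, hWnd, hWb⟩ := exists_isOrthogonalBlock_le hσ hX hB hXB hN hnd hne
  have hWinv : ∀ x ∈ W, X x ∈ W := hWb.1
  have htop := sup_orthogonalBilin_eq_top hB hWnd
  have hsup : W ⊔ N ⊓ W.orthogonalBilin B = N := by
    rw [inf_comm, ← sup_inf_assoc_of_le _ hWN, htop, top_inf_eq]
  have hlt : N ⊓ W.orthogonalBilin B < N := by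
    refine inf_le_left.lt_of_ne fun h => hW0 ?_
    rw [← hWnd, eq_comm, inf_eq_left]
    exact hWN.trans (inf_eq_left.1 h)
  have hinv : ∀ x ∈ N ⊓ W.orthogonalBilin B, X x ∈ N ⊓ W.orthogonalBilin B := fun x hx =>
    ⟨hN x hx.1, by simpa using
      aeval_apply_mem_orthogonalBilin hX hXB hWinv Polynomial.X hx.2⟩
  have hnd' : (N ⊓ W.orthogonalBilin B) ⊓ (N ⊓ W.orthogonalBilin B).orthogonalBilin B = ⊥ := by
    rw [Submodule.eq_bot_iff]
    intro x hx
    have hmem : x ∈ N ⊓ N.orthogonalBilin B := by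
      refine ⟨hx.1.1, ?_⟩
      intro y hy
      rw [← hsup] at hy
      obtain ⟨w, hw, z, hz, rfl⟩ := Submodule.mem_sup.1 hy
      have h1 : B w x = 0 := hx.1.2 w hw
      have h2 : B z x = 0 := hx.2 z hz
      rw [map_add, LinearMap.add_apply, h1, h2, add_zero]
    rwa [hnd] at hmem
  obtain ⟨k, U, hU, horth, hUnd, hUb⟩ := ih _ hlt hinv hnd'
  have hUW : ∀ i, U i ≤ W.orthogonalBilin B := fun i =>
    (le_iSup U i).trans (hU.le.trans inf_le_right)
  refine ⟨k + 1, Fin.cons W U, ?_, ?_, ?_, ?_⟩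
  · rw [← hsup, ← hU]
    refine le_antisymm (iSup_le fun i => ?_) (sup_le ?_ (iSup_le fun i => ?_))
    · refine Fin.cases ?_ (fun i => ?_) i
      · exact le_sup_left
      · exact (le_iSup U i).trans le_sup_right
    · exact le_iSup (Fin.cons W U : Fin (k + 1) → Submodule F V) 0
    · exact le_iSup (Fin.cons W U : Fin (k + 1) → Submodule F V) i.succ
  · intro i j
    refine Fin.cases ?_ (fun i => ?_) i <;> refine Fin.cases ?_ (fun j => ?_) j
    · exact fun h => (h rfl).elim
    · exact fun _ u hu v hv => hUW j hv u hu
    · exact fun _ u hu v hv => hB _ _ (hUW i hu v hv)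
    · exact fun h u hu v hv => horth i j (fun e => h (e ▸ rfl)) u hu v hv
  · exact Fin.cases hWnd hUnd
  · exact Fin.cases hWb hUb

theorem iSupIndep_of_orthogonal {ι : Type*} {U : ι → Submodule F V}
    (horth : ∀ i j, i ≠ j → ∀ u ∈ U i, ∀ v ∈ U j, B u v = 0)
    (hnd : ∀ i, U i ⊓ (U i).orthogonalBilin B = ⊥) : iSupIndep U := by
  intro i
  rw [disjoint_iff, eq_bot_iff, ← hnd i]
  exact inf_le_inf_left _ (iSup₂_le fun j hj v hv u hu => horth i j hj.symm u hu v hv)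

end Form

/-- An invertible isometry of a nondegenerate reflexive σ-sesquilinear form on a nonzero
finite-dimensional space decomposes the space into a pairwise-orthogonal internal direct
sum of `X`-invariant subspaces, each of which is either a cyclic `F[X]`-module with minimal
polynomial `f^e`, `f` irreducible self-dual with `f(0) ≠ 0`, or a direct sum `W ⊕ W'` of
cyclic `F[X]`-modules with minimal polynomials `f^e` and `(f*)^e`, `f` irreducible with
`f(0) ≠ 0`. -/
theorem orthogonal_decomposition_of_isometry
    {F V : Type*} [Field F] [Fintype F] [AddCommGroup V] [Module F V]
    [FiniteDimensional F V] [Nontrivial V]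
    (σ : F ≃+* F) (hσ : ∀ a, σ (σ a) = a)
    (β : V → V → F)
    (hβ_addl : ∀ u₁ u₂ v, β (u₁ + u₂) v = β u₁ v + β u₂ v)
    (hβ_addr : ∀ u v₁ v₂, β u (v₁ + v₂) = β u v₁ + β u v₂)
    (hβ_smull : ∀ (a : F) (u v : V), β (a • u) v = a * β u v)
    (hβ_smulr : ∀ (a : F) (u v : V), β u (a • v) = σ a * β u v)
    (hβ_refl : ∀ u v, β u v = 0 ↔ β v u = 0)
    (hβ_nd : ∀ v, (∀ u, β u v = 0) → v = 0)
    (X : V →ₗ[F] V) (hX : IsUnit X)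
    (hXiso : ∀ u v, β (X u) (X v) = β u v) :
    ∃ (k : ℕ) (U : Fin k → Submodule F V),
      DirectSum.IsInternal U ∧
      (∀ i j, i ≠ j → ∀ u ∈ U i, ∀ v ∈ U j, β u v = 0) ∧
      (∀ i, ∃ hinv : ∀ x ∈ U i, X x ∈ U i,
        (IsCyclicSub X (U i) ∧
          ∃ (f : Polynomial F) (e : ℕ), f.Monic ∧ Irreducible f ∧ f.coeff 0 ≠ 0 ∧
            sigmaDualPoly σ f = f ∧ 1 ≤ e ∧ minpoly F (X.restrict hinv) = f ^ e)
        ∨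
        (∃ (W W' : Submodule F V) (hW : ∀ x ∈ W, X x ∈ W) (hW' : ∀ x ∈ W', X x ∈ W'),
          U i = W ⊔ W' ∧ W ⊓ W' = ⊥ ∧ IsCyclicSub X W ∧ IsCyclicSub X W' ∧
          ∃ (f : Polynomial F) (e : ℕ), f.Monic ∧ Irreducible f ∧ f.coeff 0 ≠ 0 ∧ 1 ≤ e ∧
            minpoly F (X.restrict hW) = f ^ e ∧
            minpoly F (X.restrict hW') = (sigmaDualPoly σ f) ^ e)) := by
  let B : V →ₗ[F] V →ₛₗ[(σ : F →+* F)] F :=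
    LinearMap.mk₂'ₛₗ (RingHom.id F) (σ : F →+* F) β hβ_addl hβ_smull hβ_addr hβ_smulr
  have hB : B.IsRefl := fun u v h => (hβ_refl u v).1 h
  have hinj : Function.Injective X := ((Module.End.isUnit_iff X).1 hX).1
  have hnd : (⊤ : Submodule F V) ⊓ (⊤ : Submodule F V).orthogonalBilin B = ⊥ :=
    (Submodule.eq_bot_iff _).2 fun v hv => hβ_nd v fun u => hv.2 u trivial
  obtain ⟨k, U, hU, horth, hUnd, hUb⟩ := exists_isOrthogonalBlock_decomposition (B := B) hσ hinj hB
    hXiso ⊤ (fun _ _ => trivial) hnd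
  exact ⟨k, U, (DirectSum.isInternal_submodule_iff_iSupIndep_and_iSup_eq_top U).2
    ⟨iSupIndep_of_orthogonal horth hUnd, hU⟩, horth, hUb⟩
end

section
/- Let q be a prime power, K the field with q² elements with Frobenius automorphism σ(a) = a^q, and let X ∈ M_n(K) be invertible. Then there exists an invertible hermitian matrix B ∈ M_n(K) (that is, B* = B) with X·B·X* = B if and only if X is similar to (X*)⁻¹. -/
open Matrix

/-- For a matrix over the field `K` with `q²` elements, `X* = (σX)ᵀ` where `σ(a) = a^q`
is the Frobenius automorphism. -/
def hermStar {K : Type*} [Field K] {n : ℕ} (q : ℕ) (X : Matrix (Fin n) (Fin n) K) :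
    Matrix (Fin n) (Fin n) K :=
  (X.map fun a => a ^ q)ᵀ

/-- A form of Hilbert 90 for a finite commutative ring with an involution `τ`. -/
theorem exists_isUnit_eq_mul_map {A : Type*} [CommRing A] [Finite A] (τ : A →+* A)
    (hτ : ∀ a, τ (τ a) = a) {c : A} (hc : IsUnit (c - τ c)) {t : A} (ht : t * τ t = 1) :
    ∃ b, IsUnit b ∧ b = t * τ b := by
  classical
  let conj (m : MaximalSpectrum A) : MaximalSpectrum A :=
    ⟨m.1.comap τ, Ideal.comap_isMaximal_of_surjective τ fun a => ⟨τ a, hτ a⟩⟩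
  have conj_conj (m) : conj (conj m) = m := by
    ext a
    simp [conj, Ideal.mem_comap, hτ]
  have key : ∃ f : MaximalSpectrum A → A, ∀ m, f m + t * τ (f (conj m)) ∉ m.1 := by
    have hfix (m : MaximalSpectrum A) : ∃ a, a + t * τ a ∉ m.1 := by
      by_contra! h
      have h1 : 1 + t ∈ m.1 := by simpa using h 1
      have h2 : c - τ c ∈ m.1 := by
        have := m.1.sub_mem (h c) (m.1.mul_mem_right (τ c) h1)
        convert this using 1
        ring
      exact m.2.ne_top (m.1.eq_top_of_isUnit_mem h2 hc)
    choose g hg using hfix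
    have htu : IsUnit t := IsUnit.of_mul_eq_one _ ht
    refine ⟨fun m => if conj m = m then g m else if WellOrderingRel m (conj m) then 1 else 0,
      fun m => ?_⟩
    have h1 := m.2.ne_top
    by_cases h : conj m = m
    · simpa [h] using hg m
    · have h' : ¬ m = conj m := fun e => h e.symm
      rcases trichotomous_of WellOrderingRel m (conj m) with hlt | heq | hlt
      · have := asymm_of WellOrderingRel hlt
        simpa [h, h', conj_conj, hlt, this] using (Ideal.ne_top_iff_one _).1 h1
      · exact absurd heq h'
      · have := asymm_of WellOrderingRel hlt
        simpa [h, h', conj_conj, hlt, this] using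
          fun e => h1 (m.1.eq_top_of_isUnit_mem e htu)
  obtain ⟨f, hf⟩ := key
  obtain ⟨a, ha⟩ := Ideal.exists_forall_sub_mem_ideal (I := fun m : MaximalSpectrum A => m.1)
    (fun m m' h => Ideal.isCoprime_of_isMaximal fun e => h (MaximalSpectrum.ext e)) f
  refine ⟨a + t * τ a, ?_, ?_⟩
  · by_contra hu
    obtain ⟨m, hm, hmem⟩ := exists_max_ideal_of_mem_nonunits hu
    refine hf ⟨m, hm⟩ ?_
    have h1 : a - f ⟨m, hm⟩ ∈ m := ha ⟨m, hm⟩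
    have h2 : τ (a - f (conj ⟨m, hm⟩)) ∈ m := ha (conj ⟨m, hm⟩)
    have := m.sub_mem (m.sub_mem hmem h1) (m.mul_mem_left t h2)
    convert this using 1
    rw [map_sub]
    ring
  · rw [map_add, map_mul, hτ]
    linear_combination (-a) * ht

/-- A form of Hilbert 90 for the center of a finite star ring. -/
theorem exists_mem_center_isUnit_eq_mul_star {R : Type*} [Ring R] [Finite R] [StarRing R]
    {c : R} (hc : c ∈ Subring.center R) (hcu : IsUnit (c - star c)) {t : R}
    (ht : t ∈ Subring.center R) (htt : t * star t = 1) :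
    ∃ u ∈ Subring.center R, IsUnit u ∧ u = t * star u := by
  have hstar {a : R} (ha : a ∈ Subring.center R) : star a ∈ Subring.center R :=
    Set.star_mem_center ha
  let τ : Subring.center R →+* Subring.center R :=
    { toFun := fun a => ⟨star a.1, hstar a.2⟩
      map_one' := Subtype.ext (star_one R)
      map_mul' := fun a b => Subtype.ext <|
        (star_mul a.1 b.1).trans (Subring.mem_center_iff.1 (hstar a.2) _)
      map_zero' := Subtype.ext (star_zero R)
      map_add' := fun a b => Subtype.ext (star_add a.1 b.1) }
  obtain ⟨v, hv⟩ := hcu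
  have hv_mem : (↑v⁻¹ : R) ∈ Subring.center R := by
    have : (v : R) ∈ Set.center R := hv ▸ (Subring.center R).sub_mem hc (hstar hc)
    exact Set.units_inv_mem_center this
  have hunit : IsUnit ((⟨c, hc⟩ : Subring.center R) - τ ⟨c, hc⟩) := by
    refine IsUnit.of_mul_eq_one ⟨↑v⁻¹, hv_mem⟩ (Subtype.ext ?_)
    change (c - star c) * ↑v⁻¹ = 1
    rw [← hv, Units.mul_inv]
  obtain ⟨u, hu, hut⟩ := exists_isUnit_eq_mul_map τ (fun a => Subtype.ext (star_star a.1)) hunit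
    (t := ⟨t, ht⟩) (Subtype.ext htt)
  exact ⟨u, u.2, hu.map (Subring.center R).subtype, congrArg Subtype.val hut⟩

/-- An invertible sesquilinear form invariant under `x` can be replaced by a hermitian one. -/
theorem exists_star_eq_of_mul_mul_star_eq {R : Type*} [Ring R] [Finite R] [StarRing R]
    {c : R} (hc : c ∈ Subring.center R) (hcu : IsUnit (c - star c)) (x P : Rˣ)
    (h : x * P * star x = P) :
    ∃ b : R, IsUnit b ∧ star b = b ∧ x * b * star (x : R) = b := by
  let T : Rˣ := P * (star P)⁻¹
  let C : Subring R := Subring.centralizer {(T : R)}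
  have mem_C {z : R} : z ∈ C ↔ Commute (T : R) z := by
    simp [C, Subring.mem_centralizer_iff, Commute, SemiconjBy]
  have hconj (z : R) (hz : z ∈ C) : (T : R) * z * ↑T⁻¹ = z := by
    rw [(mem_C.1 hz).eq, Units.mul_inv_cancel_right]
  have hstarT : ((star T : Rˣ) : R) = ↑P⁻¹ * ↑T⁻¹ * ↑P := by
    simp [T, ← mul_assoc]
  have star_mem (z : R) (hz : z ∈ C) : (P : R) * star z * ↑P⁻¹ ∈ C := by
    rw [mem_C] at hz ⊢
    have h1 : ((star T : Rˣ) : R) * star z = star z * ((star T : Rˣ) : R) := hz.star_star.eq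
    rw [hstarT] at h1
    refine Commute.units_inv_left_iff.1 ?_
    have h2 := congrArg (fun y => (P : R) * y * ↑P⁻¹) h1
    simpa [Commute, SemiconjBy, mul_assoc] using h2
  let _ : StarRing C :=
    { star := fun z => ⟨P * star z.1 * ↑P⁻¹, star_mem z.1 z.2⟩
      star_involutive := fun z => Subtype.ext <| by
        change (P : R) * star (P * star z.1 * ↑P⁻¹) * ↑P⁻¹ = z.1
        conv_rhs => rw [← hconj z.1 z.2]
        simp [T, mul_assoc]
      star_mul := fun y z => Subtype.ext <| by
        change (P : R) * star (y.1 * z.1) * ↑P⁻¹ =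
          (P * star z.1 * ↑P⁻¹) * (P * star y.1 * ↑P⁻¹)
        simp [mul_assoc]
      star_add := fun y z => Subtype.ext <| by
        change (P : R) * star (y.1 + z.1) * ↑P⁻¹ = P * star y.1 * ↑P⁻¹ + P * star z.1 * ↑P⁻¹
        simp [mul_add, add_mul] }
  have hx : (x : R) ∈ C := by
    have h1 : x * star P * star x = star P := by
      simpa [mul_assoc] using congrArg star h
    have h2 : T * x = x * T := calc
      T * x = (x * P * star x) * (x * star P * star x)⁻¹ * x := by rw [h, h1]
      _ = x * T := by simp only [T]; group
    exact mem_C.2 (congrArg Units.val h2)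
  have hcC : c ∈ C := mem_C.2 ((Subring.mem_center_iff.1 hc) _)
  have hsc : (P : R) * star c * ↑P⁻¹ = star c := by
    have : star c ∈ Subring.center R := Set.star_mem_center hc
    rw [Subring.mem_center_iff.1 this, Units.mul_inv_cancel_right]
  have hTC : (↑T⁻¹ : R) ∈ C := mem_C.2 (Units.mul_inv T |>.trans (Units.inv_mul T).symm)
  have hcenter : (⟨c, hcC⟩ : C) ∈ Subring.center C :=
    Subring.mem_center_iff.2 fun z => Subtype.ext (Subring.mem_center_iff.1 hc z.1)
  have hTcenter : (⟨↑T⁻¹, hTC⟩ : C) ∈ Subring.center C :=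
    Subring.mem_center_iff.2 fun z => Subtype.ext ((mem_C.1 z.2).units_inv_left.eq.symm)
  have hunit : IsUnit ((⟨c, hcC⟩ : C) - star ⟨c, hcC⟩) := by
    obtain ⟨v, hv⟩ := hcu
    have hv_mem : (v : R) ∈ C := hv ▸ C.sub_mem hcC (hsc ▸ star_mem c hcC)
    have hv_inv_mem : (↑v⁻¹ : R) ∈ C := mem_C.2 (mem_C.1 hv_mem).units_inv_right
    refine ⟨⟨⟨v, hv_mem⟩, ⟨↑v⁻¹, hv_inv_mem⟩, Subtype.ext v.mul_inv, Subtype.ext v.inv_mul⟩,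
      Subtype.ext ?_⟩
    change (v : R) = c - P * star c * ↑P⁻¹
    rw [hv, hsc]
  have hTT : (⟨↑T⁻¹, hTC⟩ : C) * star ⟨↑T⁻¹, hTC⟩ = 1 := by
    refine Subtype.ext ?_
    change (↑T⁻¹ : R) * (P * star (↑T⁻¹ : R) * ↑P⁻¹) = 1
    have h1 : star (P : R) * star (↑P⁻¹ : R) = 1 := by rw [← star_mul, Units.inv_mul, star_one]
    simp [T, mul_assoc, h1]
  obtain ⟨u, hu, huu, hut⟩ := exists_mem_center_isUnit_eq_mul_star hcenter hunit hTcenter hTT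
  have hux : (x : R) * u = u * x := congrArg Subtype.val (Subring.mem_center_iff.1 hu ⟨x, hx⟩)
  have hPu : (x : R) * P * star (x : R) = P := congrArg Units.val h
  have hut' : (u : R) = ↑T⁻¹ * (P * star u.1 * ↑P⁻¹) := congrArg Subtype.val hut
  refine ⟨u * P, (huu.map C.subtype).mul P.isUnit, ?_, ?_⟩
  · have h1 : star (P : R) * star u.1 = ↑T⁻¹ * P * star u.1 := by simp [T]
    rw [star_mul, h1]
    conv_rhs => rw [hut']
    simp only [mul_assoc, Units.inv_mul, mul_one]
  · rw [← mul_assoc, hux, mul_assoc (u : R), mul_assoc (u : R), hPu]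

/-- Let `K` be the field with `q²` elements, `q` a prime power, and let `X ∈ GL(n,K)`.
There exists an invertible hermitian matrix `B` with `X·B·X* = B` if and only if
`X` is similar to `(X*)⁻¹`. -/
theorem exists_hermitian_form_iff_similar_star_inv
    {p k : ℕ} [Fact p.Prime] (hk : k ≠ 0) (q : ℕ) (hq : q = p ^ k)
    {K : Type*} [Field K] [Fintype K] (hcard : Fintype.card K = q ^ 2)
    {n : ℕ} (X : Matrix (Fin n) (Fin n) K) (hX : IsUnit X) :
    (∃ B : Matrix (Fin n) (Fin n) K, IsUnit B ∧ hermStar q B = B ∧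
        X * B * hermStar q X = B) ↔
      (∃ P : Matrix (Fin n) (Fin n) K, IsUnit P ∧ (hermStar q X)⁻¹ = P⁻¹ * X * P) := by
  have hp : p.Prime := Fact.out
  have : CharP K p := charP_of_card_eq_prime_pow (f := k * 2) (by rw [hcard, hq, pow_mul])
  have hq1 : 1 < q := hq ▸ Nat.one_lt_pow hk hp.one_lt
  let _ : StarRing K :=
    { star := fun a => a ^ q
      star_involutive := fun a => by
        change (a ^ q) ^ q = a
        rw [← pow_mul, ← sq, ← hcard, FiniteField.pow_card]
      star_mul := fun a b => by
        change (a * b) ^ q = b ^ q * a ^ q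
        rw [mul_pow, mul_comm]
      star_add := fun a b => by
        change (a + b) ^ q = a ^ q + b ^ q
        rw [hq, add_pow_char_pow] }
  have hstar (Y : Matrix (Fin n) (Fin n) K) : hermStar q Y = Yᴴ := rfl
  obtain ⟨c, hc⟩ : ∃ c : K, star c ≠ c := by
    by_contra! hall
    have h1 : ∀ x : Kˣ, x ^ (q - 1) = 1 := fun x => by
      have h2 : x ^ q = x := Units.ext (hall x)
      rwa [← Nat.sub_add_cancel hq1.le, pow_succ, mul_eq_right] at h2
    have h2 := Nat.le_of_dvd (by omega) ((FiniteField.forall_pow_eq_one_iff K (q - 1)).1 h1)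
    rw [hcard] at h2
    have : q < q ^ 2 := by nlinarith
    omega
  simp only [hstar]
  have hXs : IsUnit Xᴴ.det := (isUnit_iff_isUnit_det _).1 hX.star
  constructor
  · rintro ⟨B, hB, -, h⟩
    refine ⟨B, hB, inv_eq_left_inv ?_⟩
    rw [mul_assoc, mul_assoc, ← mul_assoc X, h, nonsing_inv_mul _ ((isUnit_iff_isUnit_det B).1 hB)]
  · rintro ⟨P, hP, h⟩
    have h1 : X * P * Xᴴ = P := by
      have h2 : P * Xᴴ⁻¹ = X * P := by
        rw [h, ← mul_assoc, ← mul_assoc, mul_nonsing_inv _ ((isUnit_iff_isUnit_det P).1 hP),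
          one_mul]
      rw [← h2, mul_assoc, nonsing_inv_mul _ hXs, mul_one]
    obtain ⟨P, rfl⟩ := hP
    obtain ⟨X, rfl⟩ := hX
    have hsc : star (scalar (Fin n) c) = scalar (Fin n) (star c) := by
      simp [star_eq_conjTranspose, Pi.star_def]
    refine exists_star_eq_of_mul_mul_star_eq (c := scalar (Fin n) c) ?_ ?_ X P (Units.ext h1)
    · exact Subring.mem_center_iff.2 fun Y => (scalar_commute c (fun _ => mul_comm _ _) Y).eq.symm
    · rw [hsc, ← map_sub]
      exact (sub_ne_zero.2 hc.symm).isUnit.map _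
end
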